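/- arXiv:1609.01724 — 6 statements merged into one kernel-verified Lean document; each statement's English description precedes it below -/
import Mathlib

section
/- Let ε > 0, let θ : (0,ε) → ℝ be twice continuously differentiable, let V : (0,ε) → ℝ be locally integrable, and let κ ≥ 0. Assume that for all t ∈ (0,ε), θ'(t)² + θ''(t) + V(t) ≥ 3/(4t²) − κ/t. Then for every smooth u : (0,ε) → ℂ with compact support contained in (0,ε), ∫₀^ε ( |u'(t)|² + V(t)|u(t)|² ) e^{2θ(t)} dt ≥ ∫₀^ε ( 1/t² − κ/t ) |u(t)|² e^{2θ(t)} dt. -/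
open MeasureTheory Set

/-!
Expanding `0 ≤ ‖u' + ψ u‖²` and integrating `(ψ ‖u‖² e^{2θ})'` to zero bounds `∫ ‖u'‖² e^{2θ}` from
below by `∫ (ψ' + 2 ψ θ' - ψ²) ‖u‖² e^{2θ}`, for every `C¹` function `ψ`. The conjugation
`f = e^θ u` corresponds to `ψ = θ'`, which produces the potential `(θ')² + θ''`, and the classical
Hardy inequality for `f` to `ψ = -1/(2t)`. Their sum `ψ = θ' - 1/(2t)` does both at once and gives
`(θ')² + θ'' + 1/(4t²)`; adding `V` turns the `3/4` of the hypothesis into `3/4 + 1/4 = 1`.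
-/

/-- The potential `V_eff = (θ')² + θ''` of the Schrödinger form into which the unitary map
`u ↦ e^θ u` turns the Dirichlet form with measure `e^{2θ} dt`. It is meant where `θ` is twice
differentiable, since `deriv` is `0` elsewhere. -/
noncomputable def effectivePotential (θ : ℝ → ℝ) (t : ℝ) : ℝ :=
  deriv θ t ^ 2 + deriv (deriv θ) t

section CompactSupport

variable {E : Type*} [NormedAddCommGroup E]

theorem contDiff_of_contDiffOn_of_tsupport_subset {𝕜 F G : Type*} [NontriviallyNormedField 𝕜]
    [NormedAddCommGroup F] [NormedSpace 𝕜 F] [NormedAddCommGroup G] [NormedSpace 𝕜 G]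
    {n : WithTop ℕ∞} {Ω : Set F} {f : F → G} (hΩ : IsOpen Ω) (hf : ContDiffOn 𝕜 n f Ω)
    (hsupp : tsupport f ⊆ Ω) : ContDiff 𝕜 n f := by
  have hzero : ContDiffOn 𝕜 n f (tsupport f)ᶜ :=
    contDiffOn_const.congr fun _ ↦ image_eq_zero_of_notMem_tsupport
  refine contDiff_of_contDiffOn_union_of_isOpen hf hzero ?_ hΩ (isClosed_tsupport f).isOpen_compl
  exact eq_univ_of_forall fun x ↦ (em (x ∈ tsupport f)).imp_left (@hsupp x)

theorem integrable_mul_norm_sq_mul {X : Type*} [TopologicalSpace X] [T2Space X]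
    [MeasurableSpace X] [OpensMeasurableSpace X] {μ : Measure X} {Ω : Set X} {w ρ : X → ℝ}
    {u : X → E} (hw : LocallyIntegrableOn w Ω μ) (hρ : ContinuousOn ρ Ω) (hu : Continuous u)
    (hcs : HasCompactSupport u) (hsupp : tsupport u ⊆ Ω) :
    Integrable (fun x ↦ w x * ‖u x‖ ^ 2 * ρ x) μ := by
  have hcont : ContinuousOn (fun x ↦ ‖u x‖ ^ 2 * ρ x) (tsupport u) :=
    (hu.norm.pow 2).continuousOn.mul (hρ.mono hsupp)
  have hon : IntegrableOn (fun x ↦ w x * (‖u x‖ ^ 2 * ρ x)) (tsupport u) μ :=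
    (hw.integrableOn_compact_subset hsupp hcs).mul_continuousOn hcont hcs
  simp only [← mul_assoc] at hon
  refine (integrableOn_iff_integrable_of_support_subset fun x hx ↦ ?_).1 hon
  contrapose! hx
  simp [image_eq_zero_of_notMem_tsupport hx]

variable [NormedSpace ℝ E] {Ω : Set ℝ} {f : ℝ → E}

theorem integrable_deriv_of_hasCompactSupport (hf : ContDiff ℝ 1 f) (hcs : HasCompactSupport f) :
    Integrable (deriv f) :=
  (hf.continuous_deriv le_rfl).integrable_of_hasCompactSupport hcs.deriv

theorem setIntegral_deriv_eq_zero_of_hasCompactSupport (hf : ContDiff ℝ 1 f)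
    (hcs : HasCompactSupport f) (hsupp : tsupport f ⊆ Ω) : ∫ t in Ω, deriv f t = 0 := by
  rw [setIntegral_eq_integral_of_forall_compl_eq_zero fun t ht ↦
    Function.notMem_support.1 fun h ↦ ht (hsupp (support_deriv_subset h))]
  exact integral_eq_zero_of_hasDerivAt_of_integrable
    (fun t ↦ (hf.differentiable one_ne_zero t).hasDerivAt)
    (integrable_deriv_of_hasCompactSupport hf hcs)
    (hf.continuous.integrable_of_hasCompactSupport hcs)

theorem integrable_norm_deriv_sq_mul {ρ : ℝ → ℝ} (hρ : ContinuousOn ρ Ω) (hf : ContDiff ℝ 1 f)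
    (hcs : HasCompactSupport f) (hsupp : tsupport f ⊆ Ω) :
    Integrable (fun t ↦ ‖deriv f t‖ ^ 2 * ρ t) := by
  simpa only [one_mul] using integrable_mul_norm_sq_mul
    ((locallyIntegrable_const (1 : ℝ)).locallyIntegrableOn Ω) hρ (hf.continuous_deriv le_rfl)
    hcs.deriv (tsupport_deriv_subset.trans hsupp)

end CompactSupport

section WeightedHardy

variable {E : Type*} [NormedAddCommGroup E] [InnerProductSpace ℝ E] {Ω : Set ℝ} {θ ψ : ℝ → ℝ}
  {u : ℝ → E}

theorem riccati_mul_norm_sq_le_add_deriv {t : ℝ} (hθ : DifferentiableAt ℝ θ t)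
    (hψ : DifferentiableAt ℝ ψ t) (hu : DifferentiableAt ℝ u t) :
    (deriv ψ t + 2 * ψ t * deriv θ t - ψ t ^ 2) * ‖u t‖ ^ 2 * Real.exp (2 * θ t) ≤
      ‖deriv u t‖ ^ 2 * Real.exp (2 * θ t) +
        deriv (fun s ↦ ψ s * ‖u s‖ ^ 2 * Real.exp (2 * θ s)) t := by
  have hderiv : deriv (fun s ↦ ψ s * ‖u s‖ ^ 2 * Real.exp (2 * θ s)) t =
      (deriv ψ t * ‖u t‖ ^ 2 + ψ t * (2 * inner ℝ (u t) (deriv u t))) * Real.exp (2 * θ t) +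
        ψ t * ‖u t‖ ^ 2 * (Real.exp (2 * θ t) * (2 * deriv θ t)) :=
    ((hψ.hasDerivAt.mul hu.hasDerivAt.norm_sq).mul (hθ.hasDerivAt.const_mul 2).exp).deriv
  have hsquare : ‖deriv u t + ψ t • u t‖ ^ 2 =
      ‖deriv u t‖ ^ 2 + 2 * (ψ t * inner ℝ (u t) (deriv u t)) + ψ t ^ 2 * ‖u t‖ ^ 2 := by
    rw [norm_add_sq_real, inner_smul_right, real_inner_comm, norm_smul, mul_pow, Real.norm_eq_abs,
      sq_abs]
  have hnonneg := mul_nonneg (sq_nonneg ‖deriv u t + ψ t • u t‖) (Real.exp_pos (2 * θ t)).le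
  rw [hsquare] at hnonneg
  rw [hderiv]
  linarith

theorem setIntegral_riccati_mul_norm_sq_le (hΩ : IsOpen Ω) (hθ : ContDiffOn ℝ 1 θ Ω)
    (hψ : ContDiffOn ℝ 1 ψ Ω) (hu : ContDiff ℝ 1 u) (hcs : HasCompactSupport u)
    (hsupp : tsupport u ⊆ Ω) :
    ∫ t in Ω, (deriv ψ t + 2 * ψ t * deriv θ t - ψ t ^ 2) * ‖u t‖ ^ 2 * Real.exp (2 * θ t) ≤
      ∫ t in Ω, ‖deriv u t‖ ^ 2 * Real.exp (2 * θ t) := by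
  set F : ℝ → ℝ := fun t ↦ ψ t * ‖u t‖ ^ 2 * Real.exp (2 * θ t)
  have hexp : ContDiffOn ℝ 1 (fun t ↦ Real.exp (2 * θ t)) Ω := (contDiffOn_const.mul hθ).exp
  have hF_support : Function.support F ⊆ Function.support u := fun t ht h ↦ ht (by simp [F, h])
  have hF_tsupport : tsupport F ⊆ Ω := (closure_mono hF_support).trans hsupp
  have hF_cs : HasCompactSupport F := hcs.mono hF_support
  have hF : ContDiff ℝ 1 F :=
    contDiff_of_contDiffOn_of_tsupport_subset hΩ ((hψ.mul (hu.norm_sq ℝ).contDiffOn).mul hexp)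
      hF_tsupport
  have hriccati : ContinuousOn (fun t ↦ deriv ψ t + 2 * ψ t * deriv θ t - ψ t ^ 2) Ω :=
    ((hψ.continuousOn_deriv_of_isOpen hΩ le_rfl).add ((continuousOn_const.mul hψ.continuousOn).mul
      (hθ.continuousOn_deriv_of_isOpen hΩ le_rfl))).sub (hψ.continuousOn.pow 2)
  have hlhs := integrable_mul_norm_sq_mul (μ := volume)
    (hriccati.locallyIntegrableOn hΩ.measurableSet) hexp.continuousOn hu.continuous hcs hsupp
  have henergy := integrable_norm_deriv_sq_mul hexp.continuousOn hu hcs hsupp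
  have hF' := integrable_deriv_of_hasCompactSupport hF hF_cs
  calc ∫ t in Ω, (deriv ψ t + 2 * ψ t * deriv θ t - ψ t ^ 2) * ‖u t‖ ^ 2 * Real.exp (2 * θ t)
      ≤ ∫ t in Ω, (‖deriv u t‖ ^ 2 * Real.exp (2 * θ t) + deriv F t) :=
        setIntegral_mono_on hlhs.integrableOn (henergy.add hF').integrableOn hΩ.measurableSet
          fun t ht ↦ riccati_mul_norm_sq_le_add_deriv
            ((hθ.contDiffAt (hΩ.mem_nhds ht)).differentiableAt one_ne_zero)
            ((hψ.contDiffAt (hΩ.mem_nhds ht)).differentiableAt one_ne_zero)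
            (hu.differentiable one_ne_zero t)
    _ = ∫ t in Ω, ‖deriv u t‖ ^ 2 * Real.exp (2 * θ t) := by
        rw [integral_add henergy.integrableOn hF'.integrableOn,
          setIntegral_deriv_eq_zero_of_hasCompactSupport hF hF_cs hF_tsupport, add_zero]

theorem riccati_deriv_sub_half_inv {t : ℝ} (ht : t ≠ 0) (hθ' : DifferentiableAt ℝ (deriv θ) t) :
    deriv (fun s ↦ deriv θ s - 1 / 2 * s⁻¹) t + 2 * (deriv θ t - 1 / 2 * t⁻¹) * deriv θ t -
        (deriv θ t - 1 / 2 * t⁻¹) ^ 2 =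
      effectivePotential θ t + 1 / (4 * t ^ 2) := by
  have hderiv : deriv (fun s ↦ deriv θ s - 1 / 2 * s⁻¹) t =
      deriv (deriv θ) t - 1 / 2 * -(t ^ 2)⁻¹ :=
    (hθ'.hasDerivAt.sub ((hasDerivAt_inv ht).const_mul (1 / 2))).deriv
  rw [hderiv, effectivePotential]
  field

theorem setIntegral_effectivePotential_add_hardy_le (hΩ : IsOpen Ω) (hΩ0 : (0 : ℝ) ∉ Ω)
    (hθ : ContDiffOn ℝ 2 θ Ω) (hu : ContDiff ℝ 1 u) (hcs : HasCompactSupport u)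
    (hsupp : tsupport u ⊆ Ω) :
    ∫ t in Ω, (effectivePotential θ t + 1 / (4 * t ^ 2)) * ‖u t‖ ^ 2 * Real.exp (2 * θ t) ≤
      ∫ t in Ω, ‖deriv u t‖ ^ 2 * Real.exp (2 * θ t) := by
  have hne : ∀ t ∈ Ω, t ≠ 0 := fun t ht ↦ ne_of_mem_of_not_mem ht hΩ0
  have hθ' : ContDiffOn ℝ 1 (deriv θ) Ω := hθ.deriv_of_isOpen hΩ (by norm_num)
  have hψ : ContDiffOn ℝ 1 (fun t ↦ deriv θ t - 1 / 2 * t⁻¹) Ω :=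
    hθ'.sub (contDiffOn_const.mul (contDiffOn_id.inv hne))
  refine (setIntegral_congr_fun hΩ.measurableSet fun t ht ↦ ?_).trans_le
    (setIntegral_riccati_mul_norm_sq_le hΩ (hθ.of_le one_le_two) hψ hu hcs hsupp)
  simp only [riccati_deriv_sub_half_inv (hne t ht)
    ((hθ'.contDiffAt (hΩ.mem_nhds ht)).differentiableAt one_ne_zero)]

theorem continuousOn_effectivePotential (hΩ : IsOpen Ω) (hθ : ContDiffOn ℝ 2 θ Ω) :
    ContinuousOn (effectivePotential θ) Ω := by
  have hθ' : ContDiffOn ℝ 1 (deriv θ) Ω := hθ.deriv_of_isOpen hΩ (by norm_num)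
  exact (hθ'.continuousOn.pow 2).add (hθ'.continuousOn_deriv_of_isOpen hΩ le_rfl)

theorem setIntegral_mul_norm_sq_le_of_le_effectivePotential_add (hΩ : IsOpen Ω)
    (hΩ0 : (0 : ℝ) ∉ Ω) (hθ : ContDiffOn ℝ 2 θ Ω) {V W : ℝ → ℝ} (hV : LocallyIntegrableOn V Ω)
    (hW : LocallyIntegrableOn W Ω)
    (hle : ∀ t ∈ Ω, W t ≤ effectivePotential θ t + 1 / (4 * t ^ 2) + V t) (hu : ContDiff ℝ 1 u)
    (hcs : HasCompactSupport u) (hsupp : tsupport u ⊆ Ω) :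
    ∫ t in Ω, W t * ‖u t‖ ^ 2 * Real.exp (2 * θ t) ≤
      ∫ t in Ω, (‖deriv u t‖ ^ 2 + V t * ‖u t‖ ^ 2) * Real.exp (2 * θ t) := by
  set P : ℝ → ℝ := fun t ↦ effectivePotential θ t + 1 / (4 * t ^ 2)
  have hexp : ContinuousOn (fun t ↦ Real.exp (2 * θ t)) Ω :=
    (continuousOn_const.mul hθ.continuousOn).rexp
  have hHardy : ContinuousOn (fun t : ℝ ↦ 1 / (4 * t ^ 2)) Ω :=
    continuousOn_const.div (by fun_prop) fun t ht ↦ by simp [ne_of_mem_of_not_mem ht hΩ0]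
  have hP : LocallyIntegrableOn P Ω :=
    ((continuousOn_effectivePotential hΩ hθ).add hHardy).locallyIntegrableOn
      hΩ.measurableSet
  have hintegrable {w : ℝ → ℝ} (hw : LocallyIntegrableOn w Ω) :
      IntegrableOn (fun t ↦ w t * ‖u t‖ ^ 2 * Real.exp (2 * θ t)) Ω :=
    (integrable_mul_norm_sq_mul hw hexp hu.continuous hcs hsupp).integrableOn
  calc ∫ t in Ω, W t * ‖u t‖ ^ 2 * Real.exp (2 * θ t)
      ≤ ∫ t in Ω, (P t + V t) * ‖u t‖ ^ 2 * Real.exp (2 * θ t) :=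
        setIntegral_mono_on (hintegrable hW) (hintegrable (hP.add hV)) hΩ.measurableSet
          fun t ht ↦ by gcongr; exact hle t ht
    _ = (∫ t in Ω, P t * ‖u t‖ ^ 2 * Real.exp (2 * θ t)) +
          ∫ t in Ω, V t * ‖u t‖ ^ 2 * Real.exp (2 * θ t) := by
        simp only [add_mul]
        exact integral_add (hintegrable hP) (hintegrable hV)
    _ ≤ (∫ t in Ω, ‖deriv u t‖ ^ 2 * Real.exp (2 * θ t)) +
          ∫ t in Ω, V t * ‖u t‖ ^ 2 * Real.exp (2 * θ t) :=
        add_le_add (setIntegral_effectivePotential_add_hardy_le hΩ hΩ0 hθ hu hcs hsupp) le_rfl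
    _ = ∫ t in Ω, (‖deriv u t‖ ^ 2 + V t * ‖u t‖ ^ 2) * Real.exp (2 * θ t) := by
        simp only [add_mul]
        exact (integral_add (integrable_norm_deriv_sq_mul hexp hu hcs hsupp).integrableOn
          (hintegrable hV)).symm

end WeightedHardy

theorem stmt_1_general {E : Type*} [NormedAddCommGroup E] [InnerProductSpace ℝ E] {Ω : Set ℝ}
    (hΩ : IsOpen Ω) (hΩ0 : (0 : ℝ) ∉ Ω) {θ V : ℝ → ℝ} (hθ : ContDiffOn ℝ 2 θ Ω)
    (hV : LocallyIntegrableOn V Ω) {κ : ℝ}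
    (hbound : ∀ t ∈ Ω, 3 / (4 * t ^ 2) - κ / t ≤ effectivePotential θ t + V t)
    {u : ℝ → E} (hu : ContDiff ℝ 1 u) (hcs : HasCompactSupport u) (hsupp : tsupport u ⊆ Ω) :
    ∫ t in Ω, (1 / t ^ 2 - κ / t) * ‖u t‖ ^ 2 * Real.exp (2 * θ t) ≤
      ∫ t in Ω, (‖deriv u t‖ ^ 2 + V t * ‖u t‖ ^ 2) * Real.exp (2 * θ t) := by
  have hne : ∀ t ∈ Ω, t ≠ 0 := fun t ht ↦ ne_of_mem_of_not_mem ht hΩ0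
  have hweight : ContinuousOn (fun t : ℝ ↦ 1 / t ^ 2 - κ / t) Ω :=
    (continuousOn_const.div (by fun_prop) fun t ht ↦ pow_ne_zero 2 (hne t ht)).sub
      (continuousOn_const.div continuousOn_id hne)
  refine setIntegral_mul_norm_sq_le_of_le_effectivePotential_add hΩ hΩ0 hθ hV
    (hweight.locallyIntegrableOn hΩ.measurableSet) (fun t ht ↦ ?_) hu hcs hsupp
  have hsplit : 1 / t ^ 2 = 3 / (4 * t ^ 2) + 1 / (4 * t ^ 2) := by field
  linarith [hbound t ht]

/-- One-dimensional weak Hardy inequality with effective potential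
`V_eff = (θ')² + θ''`: if `V_eff + V ≥ 3/(4t²) − κ/t` on `(0,ε)`, then the weighted
Schrödinger form is bounded below by the Hardy-type weight `1/t² − κ/t`. -/
theorem stmt_1 (ε : ℝ) (hε : 0 < ε) (θ : ℝ → ℝ)
    (hθ : ContDiffOn ℝ 2 θ (Ioo 0 ε))
    (V : ℝ → ℝ) (hV : LocallyIntegrableOn V (Ioo 0 ε))
    (κ : ℝ) (hκ : 0 ≤ κ)
    (hbound : ∀ t ∈ Ioo 0 ε,
      3 / (4 * t ^ 2) - κ / t ≤ deriv θ t ^ 2 + deriv (deriv θ) t + V t)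
    (u : ℝ → ℂ) (hu : ContDiff ℝ (⊤ : ℕ∞) u) (hcs : HasCompactSupport u)
    (hsupp : tsupport u ⊆ Ioo 0 ε) :
    ∫ t in Ioo 0 ε, (1 / t ^ 2 - κ / t) * ‖u t‖ ^ 2 * Real.exp (2 * θ t) ≤
      ∫ t in Ioo 0 ε, (‖deriv u t‖ ^ 2 + V t * ‖u t‖ ^ 2) * Real.exp (2 * θ t) := by
  exact stmt_1_general isOpen_Ioo left_notMem_Ioo hθ hV hbound
    (hu.of_le (by exact_mod_cast le_top)) hcs hsupp
end

section
/- Let a > 1, m ∈ ℝ, ε > 0, and define h(t) = (1/(2t)) · ( (2a+m)(a+1)(t/ε)^a + m(a−1) ) / ( (2a+m)(t/ε)^a − m ) for t > 0 with (2a+m)(t/ε)^a − m ≠ 0. Then at every t ∈ (0,ε] where the denominator is nonzero, h is differentiable and satisfies the backwards Riccati equation h'(t) + h(t)² − (a²−1)/(4t²) = 0; moreover h(ε) = (1+a)/(2ε) + m/(2ε). -/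
/-- The explicit solution of the backwards Riccati Cauchy problem
`h' + h² − (a²−1)/(4t²) = 0`, `h(ε) = (1+a)/(2ε) + m/(2ε)` (quadratic case). -/
noncomputable def riccatiSol (a m ε t : ℝ) : ℝ :=
  (1 / (2 * t)) *
    (((2 * a + m) * (a + 1) * (t / ε) ^ a + m * (a - 1)) /
      ((2 * a + m) * (t / ε) ^ a - m))

/-!
The substitution `h = u' / u` turns the Riccati equation `h' + h² = q` into the linear equation
`u'' = q u`. For `q = (a² - 1) / (4t²)` this is an Euler equation, and `riccatiSol a m ε` is the
logarithmic derivative of its solution `(2a + m) ε^(-a) t^((1+a)/2) - m t^((1-a)/2)`.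
-/

/-- The combination `A t^((1+a)/2) + B t^((1-a)/2)` of the two power solutions of the Euler equation
`u'' = (a² - 1) / (4t²) * u`; the exponents are the roots of `p (p - 1) = (a² - 1) / 4`. -/
noncomputable def eulerSol (a A B t : ℝ) : ℝ :=
  A * t ^ ((1 + a) / 2) + B * t ^ ((1 - a) / 2)

theorem hasDerivAt_logDeriv_of_hasDerivAt_deriv {𝕜 : Type*} [NontriviallyNormedField 𝕜]
    {u : 𝕜 → 𝕜} {q t : 𝕜} (hu : DifferentiableAt 𝕜 u t)
    (hu' : HasDerivAt (deriv u) (q * u t) t) (hut : u t ≠ 0) :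
    HasDerivAt (logDeriv u) (q - logDeriv u t ^ 2) t := by
  refine (hu'.div hu.hasDerivAt hut).congr_deriv ?_
  rw [logDeriv_apply]
  field_simp

section Euler

variable {a A B t : ℝ}

theorem hasDerivAt_eulerSol (ht : t ≠ 0) :
    HasDerivAt (eulerSol a A B) (eulerSol a (A * ((1 + a) / 2)) (B * ((1 - a) / 2)) t / t) t := by
  have hpow (p : ℝ) : HasDerivAt (fun s : ℝ ↦ s ^ p) (p * (t ^ p / t)) t := by
    simpa only [Real.rpow_sub_one ht] using Real.hasDerivAt_rpow_const (p := p) (Or.inl ht)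
  refine (((hpow _).const_mul A).add ((hpow _).const_mul B)).congr_deriv ?_
  rw [eulerSol]
  ring

theorem hasDerivAt_deriv_eulerSol (ht : t ≠ 0) :
    HasDerivAt (deriv (eulerSol a A B)) ((a ^ 2 - 1) / (4 * t ^ 2) * eulerSol a A B t) t := by
  have hderiv : deriv (eulerSol a A B) =ᶠ[nhds t]
      fun s ↦ eulerSol a (A * ((1 + a) / 2)) (B * ((1 - a) / 2)) s / s := by
    filter_upwards [eventually_ne_nhds ht] with s hs using (hasDerivAt_eulerSol hs).deriv
  refine (((hasDerivAt_eulerSol ht).fun_div (hasDerivAt_id' t) ht).congr_of_eventuallyEq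
    hderiv).congr_deriv ?_
  simp only [eulerSol]
  field_simp
  ring

end Euler

section Riccati

variable {a ε t : ℝ}

theorem eulerSol_eq_rpow_mul (A B : ℝ) (hε : 0 < ε) (ht : 0 < t) :
    eulerSol a (A / ε ^ a) B t = t ^ ((1 - a) / 2) * (A * (t / ε) ^ a + B) := by
  have hsplit : t ^ ((1 + a) / 2) = t ^ a * t ^ ((1 - a) / 2) := by
    rw [← Real.rpow_add ht]
    congr 1
    ring
  rw [eulerSol, hsplit, Real.div_rpow ht.le hε.le]
  ring

theorem riccatiSol_eq_logDeriv (m : ℝ) (hε : 0 < ε) (ht : 0 < t) :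
    riccatiSol a m ε t = logDeriv (eulerSol a ((2 * a + m) / ε ^ a) (-m)) t := by
  have hfactor : t ^ ((1 - a) / 2) ≠ 0 := (Real.rpow_pos_of_pos ht _).ne'
  rw [logDeriv_apply, (hasDerivAt_eulerSol ht.ne').deriv, div_mul_eq_mul_div,
    eulerSol_eq_rpow_mul _ _ hε ht, eulerSol_eq_rpow_mul _ _ hε ht, div_right_comm,
    mul_div_mul_left _ _ hfactor, riccatiSol]
  ring

theorem hasDerivAt_riccatiSol {m : ℝ} (hε : 0 < ε) (ht : 0 < t)
    (hD : (2 * a + m) * (t / ε) ^ a - m ≠ 0) :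
    HasDerivAt (riccatiSol a m ε) ((a ^ 2 - 1) / (4 * t ^ 2) - riccatiSol a m ε t ^ 2) t := by
  have hu : eulerSol a ((2 * a + m) / ε ^ a) (-m) t ≠ 0 := by
    rw [eulerSol_eq_rpow_mul _ _ hε ht, ← sub_eq_add_neg]
    exact mul_ne_zero (Real.rpow_pos_of_pos ht _).ne' hD
  have hlog : riccatiSol a m ε =ᶠ[nhds t] logDeriv (eulerSol a ((2 * a + m) / ε ^ a) (-m)) := by
    filter_upwards [eventually_gt_nhds ht] with s hs using riccatiSol_eq_logDeriv m hε hs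
  rw [riccatiSol_eq_logDeriv m hε ht]
  exact (hasDerivAt_logDeriv_of_hasDerivAt_deriv (hasDerivAt_eulerSol ht.ne').differentiableAt
    (hasDerivAt_deriv_eulerSol ht.ne') hu).congr_of_eventuallyEq hlog

theorem riccatiSol_self (m : ℝ) (ha : a ≠ 0) (hε : ε ≠ 0) :
    riccatiSol a m ε ε = (1 + a) / (2 * ε) + m / (2 * ε) := by
  have hden : (2 * a + m) * 1 - m = 2 * a := by ring
  rw [riccatiSol, div_self hε, Real.one_rpow, hden]
  field_simp
  ring

end Riccati

theorem stmt_2_general (a m ε : ℝ) (ha : a ≠ 0) (hε : 0 < ε) :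
    (∀ t > 0, (2 * a + m) * (t / ε) ^ a - m ≠ 0 →
      HasDerivAt (riccatiSol a m ε)
        ((a ^ 2 - 1) / (4 * t ^ 2) - riccatiSol a m ε t ^ 2) t) ∧
    riccatiSol a m ε ε = (1 + a) / (2 * ε) + m / (2 * ε) :=
  ⟨fun _ ht hD ↦ hasDerivAt_riccatiSol hε ht hD, riccatiSol_self m ha hε.ne'⟩

/-- At every `t ∈ (0,ε]` where the denominator is nonzero, the explicit
function `h` is differentiable and satisfies `h'(t) + h(t)² − (a²−1)/(4t²) = 0`;
moreover `h(ε) = (1+a)/(2ε) + m/(2ε)`. -/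
theorem stmt_2 (a m ε : ℝ) (ha : 1 < a) (hε : 0 < ε) :
    (∀ t ∈ Set.Ioc 0 ε, (2 * a + m) * (t / ε) ^ a - m ≠ 0 →
      HasDerivAt (riccatiSol a m ε)
        ((a ^ 2 - 1) / (4 * t ^ 2) - riccatiSol a m ε t ^ 2) t) ∧
    riccatiSol a m ε ε = (1 + a) / (2 * ε) + m / (2 * ε) :=
  (stmt_2_general a m ε (zero_lt_one.trans ha).ne' hε).imp_left fun h t ht ↦ h t ht.1
end

section
/- Let a > 1, m ≤ 0, ε > 0, and let h(t) = (1/(2t)) · ( (2a+m)(a+1)(t/ε)^a + m(a−1) ) / ( (2a+m)(t/ε)^a − m ) on (0,ε]. If m = 0 then t·h(t) → (1+a)/2 as t → 0⁺ (in fact h(t) = (1+a)/(2t) identically), while if m < 0 then t·h(t) → (1−a)/2 as t → 0⁺. In particular h(t) → +∞ as t → 0⁺ when m = 0, and h(t) → −∞ as t → 0⁺ when m < 0. -/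
/-! The product `t * riccatiSol a m ε t` is a linear fractional function of `(t / ε) ^ a`, which
tends to `0` with `t`. For `m ≠ 0` the limit is therefore the value of that function at `0`; for
`m = 0` the function is constant. Dividing by `t` turns the sign of the limit into the sign of the
blow-up. -/

open Filter
open scoped Topology

theorem inv_mul_mul_self_eventuallyEq_nhdsNE_zero {𝕜 : Type*} [GroupWithZero 𝕜]
    [TopologicalSpace 𝕜] (f : 𝕜 → 𝕜) : (fun t => t⁻¹ * (t * f t)) =ᶠ[𝓝[≠] 0] f := by
  filter_upwards [self_mem_nhdsWithin] with t (ht : t ≠ 0)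
  exact inv_mul_cancel_left₀ ht (f t)

section LinearOrderedField

variable {𝕜 : Type*} [Field 𝕜] [LinearOrder 𝕜] [IsStrictOrderedRing 𝕜] [TopologicalSpace 𝕜]
  [OrderTopology 𝕜] {f : 𝕜 → 𝕜} {c : 𝕜}

theorem tendsto_atTop_of_tendsto_mul_nhdsGT_zero (hc : 0 < c)
    (hf : Tendsto (fun t => t * f t) (𝓝[>] 0) (𝓝 c)) : Tendsto f (𝓝[>] 0) atTop :=
  (tendsto_inv_nhdsGT_zero.atTop_mul_pos hc hf).congr'
    ((inv_mul_mul_self_eventuallyEq_nhdsNE_zero f).filter_mono (nhdsGT_le_nhdsNE 0))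

theorem tendsto_atBot_of_tendsto_mul_nhdsGT_zero (hc : c < 0)
    (hf : Tendsto (fun t => t * f t) (𝓝[>] 0) (𝓝 c)) : Tendsto f (𝓝[>] 0) atBot :=
  (tendsto_inv_nhdsGT_zero.atTop_mul_neg hc hf).congr'
    ((inv_mul_mul_self_eventuallyEq_nhdsNE_zero f).filter_mono (nhdsGT_le_nhdsNE 0))

end LinearOrderedField

theorem tendsto_linearFractional_of_tendsto_zero {α 𝕜 : Type*} [DivisionRing 𝕜]
    [TopologicalSpace 𝕜] [IsTopologicalDivisionRing 𝕜] {l : Filter α} {p : α → 𝕜}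
    (hp : Tendsto p l (𝓝 0)) (A B C : 𝕜) {D : 𝕜} (hD : D ≠ 0) :
    Tendsto (fun x => (A * p x + B) / (C * p x + D)) l (𝓝 (B / D)) := by
  have affine (u v : 𝕜) : Tendsto (fun x => u * p x + v) l (𝓝 v) := by
    simpa only [mul_zero, zero_add] using (hp.const_mul u).add_const v
  exact (affine A B).div (affine C D) hD

theorem tendsto_div_rpow_nhds_zero {a : ℝ} (ha : 0 < a) (ε : ℝ) :
    Tendsto (fun t : ℝ => (t / ε) ^ a) (𝓝 0) (𝓝 0) := by
  have hdiv : Tendsto (fun t : ℝ => t / ε) (𝓝 0) (𝓝 0) := by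
    simpa only [id_eq, zero_div] using (tendsto_id (x := 𝓝 (0 : ℝ))).div_const ε
  simpa only [Real.zero_rpow ha.ne'] using hdiv.rpow_const (Or.inr ha.le)

theorem mul_riccatiSol (a m ε : ℝ) {t : ℝ} (ht : t ≠ 0) :
    t * riccatiSol a m ε t =
      ((2 * a + m) * (a + 1) * (t / ε) ^ a + m * (a - 1)) /
        ((2 * a + m) * (t / ε) ^ a - m) / 2 := by
  rw [riccatiSol]
  field_simp

theorem riccatiSol_zero {a ε t : ℝ} (ha : a ≠ 0) (hε : 0 < ε) (ht : 0 < t) :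
    riccatiSol a 0 ε t = (1 + a) / (2 * t) := by
  have hp : (t / ε) ^ a ≠ 0 := (Real.rpow_pos_of_pos (div_pos ht hε) a).ne'
  simp only [riccatiSol, add_zero, zero_mul, sub_zero]
  field_simp
  ring

theorem tendsto_mul_riccatiSol_zero {a ε : ℝ} (ha : a ≠ 0) (hε : 0 < ε) :
    Tendsto (fun t => t * riccatiSol a 0 ε t) (𝓝[>] 0) (𝓝 ((1 + a) / 2)) := by
  refine tendsto_const_nhds.congr' ?_
  filter_upwards [self_mem_nhdsWithin] with t (ht : 0 < t)
  rw [riccatiSol_zero ha hε ht]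
  field_simp

theorem tendsto_mul_riccatiSol_of_ne_zero {a m : ℝ} (ha : 0 < a) (hm : m ≠ 0) (ε : ℝ) :
    Tendsto (fun t => t * riccatiSol a m ε t) (𝓝[>] 0) (𝓝 ((1 - a) / 2)) := by
  have hp : Tendsto (fun t : ℝ => (t / ε) ^ a) (𝓝[>] 0) (𝓝 0) :=
    (tendsto_div_rpow_nhds_zero ha ε).mono_left nhdsWithin_le_nhds
  have hlim := (tendsto_linearFractional_of_tendsto_zero hp ((2 * a + m) * (a + 1))
    (m * (a - 1)) (2 * a + m) (neg_ne_zero.mpr hm)).div_const 2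
  have hvalue : m * (a - 1) / -m = 1 - a := by
    field_simp
    ring
  rw [hvalue] at hlim
  refine hlim.congr' ?_
  filter_upwards [self_mem_nhdsWithin] with t (ht : 0 < t)
  rw [mul_riccatiSol a m ε ht.ne', sub_eq_add_neg _ m]

theorem stmt_4_general (a m ε : ℝ) (ha : 0 < a) (hε : 0 < ε) :
    (m = 0 →
      (∀ t, 0 < t → riccatiSol a m ε t = (1 + a) / (2 * t)) ∧
      Tendsto (fun t => t * riccatiSol a m ε t) (𝓝[>] 0) (𝓝 ((1 + a) / 2)) ∧
      Tendsto (riccatiSol a m ε) (𝓝[>] 0) atTop) ∧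
    (m ≠ 0 →
      Tendsto (fun t => t * riccatiSol a m ε t) (𝓝[>] 0) (𝓝 ((1 - a) / 2)) ∧
      (a < 1 → Tendsto (riccatiSol a m ε) (𝓝[>] 0) atTop) ∧
      (1 < a → Tendsto (riccatiSol a m ε) (𝓝[>] 0) atBot)) := by
  constructor
  · rintro rfl
    have hlim := tendsto_mul_riccatiSol_zero ha.ne' hε
    exact ⟨fun t ht => riccatiSol_zero ha.ne' hε ht, hlim,
      tendsto_atTop_of_tendsto_mul_nhdsGT_zero (by linarith) hlim⟩
  · intro hm
    have hlim := tendsto_mul_riccatiSol_of_ne_zero ha hm ε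
    exact ⟨hlim, fun ha₁ => tendsto_atTop_of_tendsto_mul_nhdsGT_zero (by linarith) hlim,
      fun ha₁ => tendsto_atBot_of_tendsto_mul_nhdsGT_zero (by linarith) hlim⟩

/-- Asymptotic behavior at `t → 0⁺` of the explicit Riccati solution for
`m ≤ 0`: if `m = 0` then `h(t) = (1+a)/(2t)` and `t·h(t) → (1+a)/2`, while if `m < 0`
then `t·h(t) → (1−a)/2`; in particular `h → +∞` when `m = 0` and `h → −∞` when `m < 0`. -/
theorem stmt_4 (a m ε : ℝ) (ha : 1 < a) (hm : m ≤ 0) (hε : 0 < ε) :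
    (m = 0 →
      (∀ t ∈ Set.Ioc 0 ε, riccatiSol a m ε t = (1 + a) / (2 * t)) ∧
      Filter.Tendsto (fun t => t * riccatiSol a m ε t) (nhdsWithin 0 (Set.Ioi 0))
        (nhds ((1 + a) / 2)) ∧
      Filter.Tendsto (riccatiSol a m ε) (nhdsWithin 0 (Set.Ioi 0)) Filter.atTop) ∧
    (m < 0 →
      Filter.Tendsto (fun t => t * riccatiSol a m ε t) (nhdsWithin 0 (Set.Ioi 0))
        (nhds ((1 - a) / 2)) ∧
      Filter.Tendsto (riccatiSol a m ε) (nhdsWithin 0 (Set.Ioi 0)) Filter.atBot) := by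
  have ⟨hzero, hne⟩ := stmt_4_general a m ε (one_pos.trans ha) hε
  exact ⟨fun h => ⟨fun t ht => (hzero h).1 t ht.1, (hzero h).2⟩,
    fun h => ⟨(hne h.ne).1, (hne h.ne).2.2 ha⟩⟩
end

section
/- Let c > 0, r > 2, and set ν = 1/(r−2) and τ(t) = 2ν√c · t^{−1/(2ν)} = (2√c/(r−2)) t^{1−r/2} for t > 0. Let w : (0,∞) → ℝ be twice differentiable, and let t₀ > 0 be such that w satisfies the modified Bessel equation z² w''(z) + z w'(z) − (z² + ν²) w(z) = 0 at z = τ(t₀), and w(τ(t₀)) ≠ 0. Then the function h(t) = 1/(2t) − (√c / t^{r/2}) · w'(τ(t)) / w(τ(t)) is differentiable at t₀ and satisfies h'(t₀) + h(t₀)² − c/t₀^r = 0. -/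
/-- The change of variable `τ(t) = (2√c/(r−2)) t^{1−r/2}` of the super-quadratic case. -/
noncomputable def besselTau (c r t : ℝ) : ℝ :=
  (2 * Real.sqrt c / (r - 2)) * t ^ (1 - r / 2)

/-- The Riccati ansatz `h(t) = 1/(2t) − (√c/t^{r/2}) w'(τ(t))/w(τ(t))`. -/
noncomputable def besselRiccati (c r : ℝ) (w : ℝ → ℝ) (t : ℝ) : ℝ :=
  1 / (2 * t) - Real.sqrt c / t ^ (r / 2) * (deriv w (besselTau c r t) / w (besselTau c r t))

/-!
Let `L = w' / w`. The modified Bessel equation for `w` is the Riccati equation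
`L' = 1 + ν² / z² - L / z - L²`. With `g = √c / t^{r/2}` one has `τ' = -g`, `τ = 2νtg` and
`g' = -(1 + 1 / (2ν)) g / t`. Differentiating `h = 1 / (2t) - g L(τ)` gives
`-1 / (2t²) - g' L + g² L'(τ)`, where `g² ν² / τ² = 1 / (4t²)` and `-g' L - g² L / τ = g L / t`;
hence `h' = g² - (1 / (2t) - g L)² = c / t^r - h²`.
-/

section LogDeriv

variable {𝕜 : Type*} [NontriviallyNormedField 𝕜] {w : 𝕜 → 𝕜} {z : 𝕜}

theorem hasDerivAt_logDeriv (hw : DifferentiableAt 𝕜 w z) (hw' : DifferentiableAt 𝕜 (deriv w) z)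
    (hwz : w z ≠ 0) :
    HasDerivAt (logDeriv w) (deriv (deriv w) z / w z - logDeriv w z ^ 2) z := by
  refine (hw'.hasDerivAt.div hw.hasDerivAt hwz).congr_deriv ?_
  rw [logDeriv_apply]
  field_simp

theorem hasDerivAt_logDeriv_of_modifiedBessel {ν : 𝕜} (hw : DifferentiableAt 𝕜 w z)
    (hw' : DifferentiableAt 𝕜 (deriv w) z) (hz : z ≠ 0) (hwz : w z ≠ 0)
    (hBessel : z ^ 2 * deriv (deriv w) z + z * deriv w z - (z ^ 2 + ν ^ 2) * w z = 0) :
    HasDerivAt (logDeriv w)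
      (1 + (ν / z) ^ 2 - logDeriv w z / z - logDeriv w z ^ 2) z := by
  refine (hasDerivAt_logDeriv hw hw' hwz).congr_deriv ?_
  rw [logDeriv_apply]
  field_simp
  linear_combination w z * hBessel

theorem hasDerivAt_riccati_of_modifiedBessel {τ g : 𝕜 → 𝕜} {t ν : 𝕜}
    (hτ : HasDerivAt τ (-g t) t) (hg : HasDerivAt g (-(1 + 1 / (2 * ν)) * g t / t) t)
    (hτg : τ t = 2 * ν * t * g t) (hτt : τ t ≠ 0)
    (hw : DifferentiableAt 𝕜 w (τ t)) (hw' : DifferentiableAt 𝕜 (deriv w) (τ t))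
    (hwτ : w (τ t) ≠ 0)
    (hBessel : τ t ^ 2 * deriv (deriv w) (τ t) + τ t * deriv w (τ t)
      - (τ t ^ 2 + ν ^ 2) * w (τ t) = 0) :
    HasDerivAt (fun s => 1 / (2 * s) - g s * logDeriv w (τ s))
      (g t ^ 2 - (1 / (2 * t) - g t * logDeriv w (τ t)) ^ 2) t := by
  obtain ⟨⟨⟨h2, hν⟩, ht⟩, hgt⟩ : (((2 : 𝕜) ≠ 0 ∧ ν ≠ 0) ∧ t ≠ 0) ∧ g t ≠ 0 := by
    simpa only [hτg, mul_ne_zero_iff] using hτt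
  have hinv : HasDerivAt (fun s : 𝕜 => 1 / (2 * s)) (-1 / (2 * t ^ 2)) t := by
    simpa only [one_div, mul_inv, neg_div, mul_neg, neg_mul, one_mul] using
      (hasDerivAt_inv ht).const_mul (2⁻¹ : 𝕜)
  have hL := (hasDerivAt_logDeriv_of_modifiedBessel hw hw' hτt hwτ hBessel).comp t hτ
  refine (hinv.sub (hg.mul hL)).congr_deriv ?_
  simp only [Function.comp_apply]
  generalize logDeriv w (τ t) = L
  rw [hτg]
  field_simp
  ring

end LogDeriv

theorem hasDerivAt_const_div_rpow (a p : ℝ) {t : ℝ} (ht : 0 < t) :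
    HasDerivAt (fun s => a / s ^ p) (-p * (a / t ^ p) / t) t := by
  have hp : t ^ p ≠ 0 := (Real.rpow_pos_of_pos ht p).ne'
  refine ((hasDerivAt_const t a).div (Real.hasDerivAt_rpow_const (Or.inl ht.ne')) hp).congr_deriv ?_
  rw [Real.rpow_sub_one ht.ne']
  field_simp
  ring

section BesselTau

variable {c r t : ℝ}

theorem besselTau_pos (hc : 0 < c) (hr : 2 < r) (ht : 0 < t) : 0 < besselTau c r t :=
  mul_pos (div_pos (mul_pos two_pos (Real.sqrt_pos.mpr hc)) (sub_pos.mpr hr))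
    (Real.rpow_pos_of_pos ht _)

theorem besselTau_ne_zero (hc : 0 < c) (hr : r ≠ 2) (ht : 0 < t) : besselTau c r t ≠ 0 :=
  mul_ne_zero
    (div_ne_zero (mul_ne_zero two_ne_zero (Real.sqrt_pos.mpr hc).ne') (sub_ne_zero.mpr hr))
    (Real.rpow_pos_of_pos ht _).ne'

theorem besselTau_eq_mul_sqrt_div_rpow (ht : 0 < t) :
    besselTau c r t = 2 * (1 / (r - 2)) * t * (√c / t ^ (r / 2)) := by
  rw [besselTau, Real.rpow_sub ht, Real.rpow_one]
  ring

theorem hasDerivAt_besselTau (hr : r ≠ 2) (ht : 0 < t) :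
    HasDerivAt (besselTau c r) (-(√c / t ^ (r / 2))) t := by
  have hr' : r - 2 ≠ 0 := sub_ne_zero.mpr hr
  refine ((Real.hasDerivAt_rpow_const (Or.inl ht.ne')).const_mul _).congr_deriv ?_
  rw [sub_sub_cancel_left, Real.rpow_neg ht.le]
  field_simp
  ring

end BesselTau

theorem stmt_5_general {c r t₀ : ℝ} (hc : 0 < c) (hr : r ≠ 2) (ht₀ : 0 < t₀) {w : ℝ → ℝ}
    (hw : DifferentiableAt ℝ w (besselTau c r t₀))
    (hw' : DifferentiableAt ℝ (deriv w) (besselTau c r t₀))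
    (hBessel :
      (besselTau c r t₀) ^ 2 * deriv (deriv w) (besselTau c r t₀) +
        (besselTau c r t₀) * deriv w (besselTau c r t₀) -
        ((besselTau c r t₀) ^ 2 + (1 / (r - 2)) ^ 2) * w (besselTau c r t₀) = 0)
    (hw0 : w (besselTau c r t₀) ≠ 0) :
    HasDerivAt (besselRiccati c r w)
      (c / t₀ ^ r - besselRiccati c r w t₀ ^ 2) t₀ := by
  have hτ0 := besselTau_ne_zero hc hr ht₀
  have hexp : 1 + 1 / (2 * (1 / (r - 2))) = r / 2 := by field_simp; ring
  have hsq : c / t₀ ^ r = (√c / t₀ ^ (r / 2)) ^ 2 := by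
    rw [div_pow, Real.sq_sqrt hc.le, ← Real.rpow_mul_natCast ht₀.le]
    norm_num
  have hg : HasDerivAt (fun t => √c / t ^ (r / 2))
      (-(1 + 1 / (2 * (1 / (r - 2)))) * (√c / t₀ ^ (r / 2)) / t₀) t₀ := by
    rw [hexp]
    exact hasDerivAt_const_div_rpow (√c) (r / 2) ht₀
  rw [hsq]
  exact hasDerivAt_riccati_of_modifiedBessel (hasDerivAt_besselTau hr ht₀) hg
    (besselTau_eq_mul_sqrt_div_rpow ht₀) hτ0 hw hw' hw0 hBessel

/-- If `w` is twice differentiable on `(0,∞)`, satisfies the modified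
Bessel equation of order `ν = 1/(r−2)` at `z = τ(t₀)`, and `w(τ(t₀)) ≠ 0`, then the
ansatz `h` is differentiable at `t₀` and satisfies `h'(t₀) + h(t₀)² − c/t₀^r = 0`. -/
theorem stmt_5 (c r : ℝ) (hc : 0 < c) (hr : 2 < r) (w : ℝ → ℝ)
    (hw : ∀ z ∈ Set.Ioi (0 : ℝ), DifferentiableAt ℝ w z ∧ DifferentiableAt ℝ (deriv w) z)
    (t₀ : ℝ) (ht₀ : 0 < t₀)
    (hBessel :
      (besselTau c r t₀) ^ 2 * deriv (deriv w) (besselTau c r t₀) +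
        (besselTau c r t₀) * deriv w (besselTau c r t₀) -
        ((besselTau c r t₀) ^ 2 + (1 / (r - 2)) ^ 2) * w (besselTau c r t₀) = 0)
    (hw0 : w (besselTau c r t₀) ≠ 0) :
    HasDerivAt (besselRiccati c r w)
      (c / t₀ ^ r - besselRiccati c r w t₀ ^ 2) t₀ := by
  have hτ := hw _ (besselTau_pos hc hr ht₀)
  exact stmt_5_general hc hr.ne' ht₀ hτ.1 hτ.2 hBessel hw0
end

section
/- Let κ > 0, C > 0, and define F(τ) = C · (1 − √(1 − κτ)) / (1 + √(1 − κτ)) · e^{2√(1 − κτ)} for 0 < τ < 1/κ. Then F is positive and differentiable on (0, 1/κ), and satisfies F'(τ) = √(1/τ² − κ/τ) · F(τ) for all τ ∈ (0, 1/κ). -/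
/-- The explicit solution `F(τ) = C (1−√(1−κτ))/(1+√(1−κτ)) e^{2√(1−κτ)}` of the ODE
`F' = √(1/τ² − κ/τ) F` used in the Agmon-type estimate. -/
noncomputable def agmonF (κ C τ : ℝ) : ℝ :=
  C * ((1 - Real.sqrt (1 - κ * τ)) / (1 + Real.sqrt (1 - κ * τ))) *
    Real.exp (2 * Real.sqrt (1 - κ * τ))

/-!
In the variable `s = √(1 - κτ)` the ODE has the right-hand side `(s / τ) F`, and `F = C G(s)` with
`G(s) = (1 - s) / (1 + s) * e^{2s}`. The exponential cancels all but the `s²` term in the derivative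
of the quotient, so `G'(s) = -2s² / (1 + s)² * e^{2s}`; this double zero at `s = 0` absorbs the pole
of `ds/dτ = -κ / (2s)`, and `κτ = (1 - s) (1 + s)` turns the product into `(s / τ) G(s)`.
-/

/-- The function `G(s) = (1 - s) / (1 + s) * e^{2s}`, through which `agmonF` depends on
`s = √(1 - κτ)`. -/
noncomputable def agmonProfile (s : ℝ) : ℝ :=
  (1 - s) / (1 + s) * Real.exp (2 * s)

theorem agmonProfile_pos {s : ℝ} (hs_neg : -1 < s) (hs_one : s < 1) : 0 < agmonProfile s :=
  mul_pos (div_pos (by linarith) (by linarith)) (Real.exp_pos _)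

theorem hasDerivAt_agmonProfile {s : ℝ} (hs : 1 + s ≠ 0) :
    HasDerivAt agmonProfile (-(2 * s ^ 2) / (1 + s) ^ 2 * Real.exp (2 * s)) s := by
  have hasDerivAt_quotient :
      HasDerivAt (fun x : ℝ => (1 - x) / (1 + x)) (-2 / (1 + s) ^ 2) s :=
    (((hasDerivAt_id' s).const_sub 1).fun_div ((hasDerivAt_id' s).const_add 1) hs).congr_deriv
      (by ring)
  have hasDerivAt_exp : HasDerivAt (fun x : ℝ => Real.exp (2 * x)) (Real.exp (2 * s) * 2) s :=
    (hasDerivAt_const_mul 2).exp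
  refine (hasDerivAt_quotient.fun_mul hasDerivAt_exp).congr_deriv ?_
  field_simp
  ring

theorem hasDerivAt_sqrt_one_sub_mul {κ τ : ℝ} (h : κ * τ ≠ 1) :
    HasDerivAt (fun t => √(1 - κ * t)) (-κ / (2 * √(1 - κ * τ))) τ :=
  ((hasDerivAt_const_mul κ).const_sub 1).sqrt (sub_ne_zero.mpr h.symm)

theorem sqrt_one_div_sq_sub_div (κ : ℝ) {τ : ℝ} (hτ : 0 < τ) :
    √(1 / τ ^ 2 - κ / τ) = √(1 - κ * τ) / τ := by
  have common_denominator : 1 / τ ^ 2 - κ / τ = (1 - κ * τ) / τ ^ 2 := by field_simp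
  rw [common_denominator, Real.sqrt_div' _ (sq_nonneg τ), Real.sqrt_sq hτ.le]

theorem agmonF_eq_mul_agmonProfile (κ C τ : ℝ) :
    agmonF κ C τ = C * agmonProfile √(1 - κ * τ) :=
  mul_assoc _ _ _

theorem agmonF_pos {κ C τ : ℝ} (hC : 0 < C) (hκτ : 0 < κ * τ) : 0 < agmonF κ C τ := by
  have neg_one_lt_sqrt : -1 < √(1 - κ * τ) := neg_one_lt_zero.trans_le (Real.sqrt_nonneg _)
  have sqrt_lt_one : √(1 - κ * τ) < 1 := by
    rw [Real.sqrt_lt' one_pos]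
    linarith
  rw [agmonF_eq_mul_agmonProfile]
  exact mul_pos hC (agmonProfile_pos neg_one_lt_sqrt sqrt_lt_one)

theorem hasDerivAt_agmonF {κ τ : ℝ} (C : ℝ) (hτ : 0 < τ) (hκτ : κ * τ < 1) :
    HasDerivAt (agmonF κ C) (√(1 / τ ^ 2 - κ / τ) * agmonF κ C τ) τ := by
  have one_add_sqrt_ne_zero : 1 + √(1 - κ * τ) ≠ 0 := by positivity
  have chain_rule := ((hasDerivAt_agmonProfile one_add_sqrt_ne_zero).comp τ
    (hasDerivAt_sqrt_one_sub_mul hκτ.ne)).const_mul C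
  rw [agmonF_eq_mul_agmonProfile κ C τ, funext (agmonF_eq_mul_agmonProfile κ C),
    sqrt_one_div_sq_sub_div κ hτ]
  refine chain_rule.congr_deriv ?_
  have sqrt_pos : 0 < √(1 - κ * τ) := Real.sqrt_pos.mpr (sub_pos.mpr hκτ)
  have factorization : κ * τ = (1 - √(1 - κ * τ)) * (1 + √(1 - κ * τ)) := by
    linear_combination Real.sq_sqrt (sub_pos.mpr hκτ).le
  rw [agmonProfile]
  field_simp
  linear_combination C * factorization

/-- For `κ > 0`, `C > 0`, the function `F` is positive and differentiable
on `(0, 1/κ)` and satisfies `F'(τ) = √(1/τ² − κ/τ) F(τ)` there. -/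
theorem stmt_6 (κ C : ℝ) (hκ : 0 < κ) (hC : 0 < C) :
    ∀ τ ∈ Set.Ioo 0 (1 / κ),
      0 < agmonF κ C τ ∧
      HasDerivAt (agmonF κ C) (Real.sqrt (1 / τ ^ 2 - κ / τ) * agmonF κ C τ) τ := by
  rintro τ ⟨hτ_pos, hτ_lt⟩
  have mul_lt_one : κ * τ < 1 := (lt_div_iff₀' hκ).mp hτ_lt
  exact ⟨agmonF_pos hC (mul_pos hκ hτ_pos), hasDerivAt_agmonF C hτ_pos mul_lt_one⟩
end

section
/- Let n ≥ 1, let u : ℝⁿ → ℂ be smooth with compact support, and let f : ℝⁿ → ℝ be continuously differentiable. Then ∫_{ℝⁿ} |∇(fu)|² dx = Re ∫_{ℝⁿ} Σⱼ ∂ⱼu · conj(∂ⱼ(f² u)) dx + ∫_{ℝⁿ} |∇f|² |u|² dx, where ∂ⱼ denotes the j-th partial derivative, ∇g = (∂₁g, …, ∂ₙg), |∇(fu)|² = Σⱼ |∂ⱼ(fu)|², and conj denotes complex conjugation. -/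
open MeasureTheory

/-!
The identity holds pointwise, one direction at a time, without integration by parts. Write `a` and
`b` for the derivatives of `u` and `f`. By the product rule `f u` and `f² u` have derivatives
`f a + b u` and `f² a + 2 f b u`, and both sides expand to `f² |a|² + 2 f b Re ⟨u, a⟩ + b² |u|²`:
since `f` is real, it comes out of the inner product from either slot. The compact support of `u`
makes the two integrands on the right integrable.
-/

section Pointwise

variable {𝕜 E F : Type*} [RCLike 𝕜] [NormedAddCommGroup E] [NormedSpace ℝ E]
  [NormedAddCommGroup F] [InnerProductSpace 𝕜 F] [NormedSpace ℝ F] [IsScalarTower ℝ 𝕜 F]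

variable (𝕜) in
theorem norm_smul_add_smul_sq_eq_re_inner_add (c b : ℝ) (a w : F) :
    ‖c • a + b • w‖ ^ 2 =
      RCLike.re (inner 𝕜 (c ^ 2 • a + (2 * c * b) • w) a) + b ^ 2 * ‖w‖ ^ 2 := by
  have re_inner_smul (r : ℝ) (y z : F) :
      RCLike.re (inner 𝕜 (r • y) z) = r * RCLike.re (inner 𝕜 y z) := by
    rw [inner_smul_left_eq_star_smul, starRingEnd_apply, star_trivial, RCLike.smul_re]
  have cross_term : RCLike.re (inner 𝕜 (c • a) (b • w)) = c * b * RCLike.re (inner 𝕜 w a) := by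
    rw [re_inner_smul, inner_re_symm, re_inner_smul, mul_assoc]
  rw [norm_add_sq (𝕜 := 𝕜), cross_term, inner_add_left, map_add, re_inner_smul, re_inner_smul,
    inner_self_eq_norm_sq, norm_smul, norm_smul, mul_pow, mul_pow, Real.norm_eq_abs,
    Real.norm_eq_abs, sq_abs, sq_abs]
  ring

variable (𝕜) in
theorem norm_fderiv_smul_sq {f : E → ℝ} {u : E → F} {x : E}
    (hf : DifferentiableAt ℝ f x) (hu : DifferentiableAt ℝ u x) (v : E) :
    ‖fderiv ℝ (fun y => f y • u y) x v‖ ^ 2 =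
      RCLike.re (inner 𝕜 (fderiv ℝ (fun y => f y ^ 2 • u y) x v) (fderiv ℝ u x v)) +
        fderiv ℝ f x v ^ 2 * ‖u x‖ ^ 2 := by
  have fderiv_smul_apply : fderiv ℝ (fun y => f y • u y) x v =
      f x • fderiv ℝ u x v + fderiv ℝ f x v • u x := by
    simp [fderiv_fun_smul hf hu]
  have fderiv_sq_smul_apply : fderiv ℝ (fun y => f y ^ 2 • u y) x v =
      f x ^ 2 • fderiv ℝ u x v + (2 * f x * fderiv ℝ f x v) • u x := by
    simp [fderiv_fun_smul (hf.fun_pow 2) hu, fderiv_fun_pow 2 hf]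
  rw [fderiv_smul_apply, fderiv_sq_smul_apply, norm_smul_add_smul_sq_eq_re_inner_add 𝕜]

end Pointwise

section Integrals

theorem integrable_mul_norm_sq {X F : Type*} [TopologicalSpace X] [MeasurableSpace X]
    [OpensMeasurableSpace X] {μ : Measure X} [IsFiniteMeasureOnCompacts μ]
    [SeminormedAddCommGroup F] {g : X → ℝ} {u : X → F} (hg : Continuous g) (hu : Continuous u)
    (hcs : HasCompactSupport u) : Integrable (fun x => g x * ‖u x‖ ^ 2) μ := by
  have norm_sq_hcs : HasCompactSupport fun x => ‖u x‖ ^ 2 :=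
    hcs.comp_left (g := fun z : F => ‖z‖ ^ 2) (by simp)
  exact (hg.mul (hu.norm.pow 2)).integrable_of_hasCompactSupport norm_sq_hcs.mul_left

variable {𝕜 E F : Type*} [RCLike 𝕜] [NormedAddCommGroup E] [NormedSpace ℝ E]
  [MeasurableSpace E] [OpensMeasurableSpace E] {μ : Measure E} [IsFiniteMeasureOnCompacts μ]
  [NormedAddCommGroup F] [InnerProductSpace 𝕜 F] [NormedSpace ℝ F]

variable (𝕜) in
theorem integrable_inner_fderiv_apply {u w : E → F} (hw : ContDiff ℝ 1 w)
    (hu : ContDiff ℝ 1 u) (hcs : HasCompactSupport u) (v : E) :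
    Integrable (fun x => inner 𝕜 (fderiv ℝ w x v) (fderiv ℝ u x v)) μ := by
  have hcont : Continuous fun x => inner 𝕜 (fderiv ℝ w x v) (fderiv ℝ u x v) :=
    .inner ((hw.continuous_fderiv one_ne_zero).clm_apply continuous_const)
      ((hu.continuous_fderiv one_ne_zero).clm_apply continuous_const)
  refine hcont.integrable_of_hasCompactSupport ((hcs.fderiv_apply (𝕜 := ℝ) v).mono ?_)
  exact Function.support_subset_iff'.2 fun x hx => by
    rw [Function.notMem_support.1 hx, inner_zero_right]

theorem stmt_9_general [IsScalarTower ℝ 𝕜 F] {ι : Type*} [Fintype ι] (e : ι → E)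
    {f : E → ℝ} {u : E → F} (hf : ContDiff ℝ 1 f) (hu : ContDiff ℝ 1 u)
    (hcs : HasCompactSupport u) :
    ∫ x, ∑ j, ‖fderiv ℝ (fun y => f y • u y) x (e j)‖ ^ 2 ∂μ =
      RCLike.re (∫ x, ∑ j,
        inner 𝕜 (fderiv ℝ (fun y => f y ^ 2 • u y) x (e j)) (fderiv ℝ u x (e j)) ∂μ) +
        ∫ x, (∑ j, fderiv ℝ f x (e j) ^ 2) * ‖u x‖ ^ 2 ∂μ := by
  have integrable_form : Integrable (fun x => ∑ j,
      inner 𝕜 (fderiv ℝ (fun y => f y ^ 2 • u y) x (e j)) (fderiv ℝ u x (e j))) μ :=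
    integrable_finsetSum _ fun j _ =>
      integrable_inner_fderiv_apply 𝕜 ((hf.pow 2).smul hu) hu hcs (e j)
  have integrable_gradient_term :
      Integrable (fun x => (∑ j, fderiv ℝ f x (e j) ^ 2) * ‖u x‖ ^ 2) μ :=
    integrable_mul_norm_sq (continuous_finsetSum _ fun j _ =>
      ((hf.continuous_fderiv one_ne_zero).clm_apply continuous_const).pow 2) hu.continuous hcs
  rw [← integral_re integrable_form, ← integral_add integrable_form.re integrable_gradient_term]
  congr with x
  rw [map_sum, Finset.sum_mul, ← Finset.sum_add_distrib]
  exact Finset.sum_congr rfl fun j _ => norm_fderiv_smul_sq 𝕜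
    (hf.differentiable one_ne_zero x) (hu.differentiable one_ne_zero x) (e j)

end Integrals

/-- Euclidean case of the key algebraic identity for the Dirichlet form:
for real-valued `C¹` `f` and smooth compactly supported `u : ℝⁿ → ℂ`,
`∫ |∇(fu)|² = Re ∫ Σⱼ ∂ⱼu ⬝ conj(∂ⱼ(f²u)) + ∫ |∇f|² |u|²`. -/
theorem stmt_9 (n : ℕ) (hn : 1 ≤ n) (u : (Fin n → ℝ) → ℂ) (hu : ContDiff ℝ (⊤ : ℕ∞) u)
    (hcs : HasCompactSupport u) (f : (Fin n → ℝ) → ℝ) (hf : ContDiff ℝ 1 f) :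
    ∫ x, ∑ j, ‖fderiv ℝ (fun y => (f y : ℂ) * u y) x (Pi.single j 1)‖ ^ 2 =
      (∫ x, ∑ j, fderiv ℝ u x (Pi.single j 1) *
          (starRingEnd ℂ)
            (fderiv ℝ (fun y => ((f y : ℂ)) ^ 2 * u y) x (Pi.single j 1))).re +
        ∫ x, (∑ j, fderiv ℝ f x (Pi.single j 1) ^ 2) * ‖u x‖ ^ 2 := by
  simpa using stmt_9_general (𝕜 := ℂ) (μ := volume) (fun j : Fin n => Pi.single j (1 : ℝ)) hf
    (hu.of_le (by exact_mod_cast le_top)) hcs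
end
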